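/- Let α > 0 be real. For every z in the unit disk E with |z| = r < 1, Re(1 + 2 ∑_{k=1}^∞ (α/(α+k)) zᵏ) ≥ 1 + 2 ∑_{k=1}^∞ (α/(α+k)) (−r)ᵏ. -/

import Mathlib

open Complex Metric

lemma aux_kernel (w : ℂ) (hw : ‖w‖ < 1) : 1 / (1 + ‖w‖) ≤ ((1 - w)⁻¹).re := by
  have h0 := norm_nonneg w
  have hx : -‖w‖ ≤ w.re := (abs_le.1 (abs_re_le_norm w)).1
  have hx' : w.re ≤ ‖w‖ := (abs_le.1 (abs_re_le_norm w)).2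
  have hs : ‖w‖ ^ 2 = w.re * w.re + w.im * w.im := by
    rw [← normSq_eq_norm_sq, normSq_apply]
  rw [inv_re, normSq_apply]
  simp only [sub_re, one_re, sub_im, one_im]
  rw [div_le_div_iff₀ (by linarith) (by nlinarith [mul_self_nonneg (0 - w.im)])]
  nlinarith [mul_nonneg (by linarith : 0 ≤ w.re + ‖w‖) (by linarith : 0 ≤ 1 - ‖w‖)]

lemma aux_hasSum (w : ℂ) (hw : ‖w‖ < 1) :
    HasSum (fun k : ℕ => (w ^ (k + 1)).re - (-‖w‖) ^ (k + 1))
      (((1 - w)⁻¹).re - 1 / (1 + ‖w‖)) := by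
  have h1 : HasSum (fun k : ℕ => w ^ (k + 1)) ((1 - w)⁻¹ - 1) := by
    have := (hasSum_nat_add_iff' (f := fun n : ℕ => w ^ n) 1).2
      (hasSum_geometric_of_norm_lt_one hw)
    simpa using this
  have h2 : HasSum (fun k : ℕ => (-‖w‖) ^ (k + 1)) ((1 - (-‖w‖))⁻¹ - 1) := by
    have := (hasSum_nat_add_iff' (f := fun n : ℕ => (-‖w‖) ^ n) 1).2
      (hasSum_geometric_of_norm_lt_one (ξ := -‖w‖) (by simpa using hw))
    simpa using this
  have h3 := (Complex.hasSum_re h1).sub h2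
  have e : ((1 - w)⁻¹).re - 1 / (1 + ‖w‖) = ((1 - w)⁻¹ - 1).re - ((1 - (-‖w‖))⁻¹ - 1) := by
    rw [sub_re _ 1, one_re, sub_neg_eq_add, one_div]
    ring
  rw [e]
  exact h3

lemma aux_nonneg (α : ℝ) (hα : 0 < α) (z : ℂ) (hz : ‖z‖ < 1) :
    0 ≤ ∑' k : ℕ, (α / (α + (k : ℝ) + 1)) * ((z ^ (k + 1)).re - (-‖z‖) ^ (k + 1)) := by
  set d : ℕ → ℝ := fun k => (z ^ (k + 1)).re - (-‖z‖) ^ (k + 1) with hd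
  have hdsum : Summable (fun k => |d k|) := (aux_hasSum z hz).summable.abs
  let F : ℕ → ℝ → ℝ := fun k t => (α * d k) * t ^ (α + k)
  have hint : ∀ k : ℕ, ∫ t in Set.Ioc (0:ℝ) 1, t ^ (α + (k:ℝ)) = 1 / (α + k + 1) := by
    intro k
    have hk : (0:ℝ) ≤ k := k.cast_nonneg
    rw [← intervalIntegral.integral_of_le zero_le_one, integral_rpow (Or.inl (by linarith))]
    rw [Real.one_rpow, Real.zero_rpow (by linarith), sub_zero]
  have hI : ∀ k : ℕ, MeasureTheory.IntegrableOn (fun t : ℝ => t ^ (α + (k:ℝ))) (Set.Ioc 0 1) := by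
    intro k
    have hk : (0:ℝ) ≤ k := k.cast_nonneg
    exact (intervalIntegrable_iff_integrableOn_Ioc_of_le zero_le_one).1
      (intervalIntegral.intervalIntegrable_rpow' (by linarith))
  have hF : ∀ k, MeasureTheory.Integrable (F k) (MeasureTheory.volume.restrict (Set.Ioc 0 1)) :=
    fun k => (hI k).const_mul _
  have hFn : ∀ k : ℕ, ∫ t in Set.Ioc (0:ℝ) 1, ‖F k t‖ = α / (α + k + 1) * |d k| := by
    intro k
    have : ∫ t in Set.Ioc (0:ℝ) 1, ‖F k t‖
        = ∫ t in Set.Ioc (0:ℝ) 1, (α * |d k|) * t ^ (α + (k:ℝ)) := by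
      refine MeasureTheory.setIntegral_congr_fun measurableSet_Ioc ?_
      intro t ht
      simp only [F, Real.norm_eq_abs, abs_mul, abs_of_pos hα,
        abs_of_nonneg (Real.rpow_nonneg ht.1.le _)]
    rw [this, MeasureTheory.integral_const_mul, hint]
    ring
  have hS : Summable fun k : ℕ => ∫ t in Set.Ioc (0:ℝ) 1, ‖F k t‖ := by
    simp_rw [hFn]
    refine Summable.of_nonneg_of_le (fun k => by positivity) (fun k => ?_) hdsum
    refine mul_le_of_le_one_left (abs_nonneg _) ?_
    have hk : (0:ℝ) ≤ k := k.cast_nonneg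
    rw [div_le_one (by positivity)]
    linarith
  have key := (MeasureTheory.hasSum_integral_of_summable_integral_norm hF hS).tsum_eq
  have e : ∀ k : ℕ, ∫ t in Set.Ioc (0:ℝ) 1, F k t = α / (α + k + 1) * d k := by
    intro k
    simp only [F]
    rw [MeasureTheory.integral_const_mul, hint]
    ring
  simp_rw [e] at key
  rw [key]
  refine MeasureTheory.setIntegral_nonneg measurableSet_Ioc ?_
  intro t ht
  have hn : ‖(t:ℂ) * z‖ = t * ‖z‖ := by
    rw [norm_mul, Complex.norm_real, Real.norm_eq_abs, abs_of_pos ht.1]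
  have hw : ‖(t:ℂ) * z‖ < 1 := by
    rw [hn]; nlinarith [ht.1, ht.2, norm_nonneg z]
  have hs := (aux_hasSum _ hw).mul_left (α * t ^ (α - 1))
  have hfe : (fun k => F k t) = fun k : ℕ => α * t ^ (α - 1) *
      ((((t:ℂ) * z) ^ (k + 1)).re - (-‖(t:ℂ) * z‖) ^ (k + 1)) := by
    funext k
    have h1 : t ^ (α + (k:ℝ)) = t ^ (α - 1) * t ^ (k + 1) := by
      rw [← Real.rpow_natCast, ← Real.rpow_add ht.1]
      congr 1; push_cast; ring
    have h2 : (((t:ℂ) * z) ^ (k + 1)).re = t ^ (k + 1) * (z ^ (k + 1)).re := by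
      rw [mul_pow, ← Complex.ofReal_pow, Complex.re_ofReal_mul]
    have h3 : (-(t * ‖z‖)) ^ (k + 1) = t ^ (k + 1) * (-‖z‖) ^ (k + 1) := by
      rw [← mul_pow]; ring
    simp only [F, hd]
    rw [hn, h1, h2, h3]
    ring
  rw [hfe, hs.tsum_eq]
  exact mul_nonneg (mul_nonneg hα.le (Real.rpow_nonneg ht.1.le _))
    (sub_nonneg.2 (aux_kernel _ hw))

/-- For `|z| = r < 1`,
`Re(1 + 2 ∑_{k=1}^∞ (α/(α+k)) zᵏ) ≥ 1 + 2 ∑_{k=1}^∞ (α/(α+k)) (−r)ᵏ`. -/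
theorem re_series_lower_bound (α : ℝ) (hα : 0 < α) :
    ∀ z ∈ ball (0 : ℂ) 1,
      (1 + 2 * ∑' k : ℕ, ((α / (α + (k : ℝ) + 1) : ℝ) : ℂ) * z ^ (k + 1)).re ≥
      1 + 2 * ∑' k : ℕ, (α / (α + (k : ℝ) + 1)) * (-‖z‖) ^ (k + 1) := by
  intro z hz
  have hz : ‖z‖ < 1 := by simpa using hz
  have hc : ∀ k : ℕ, |α / (α + (k:ℝ) + 1)| ≤ 1 := by
    intro k
    have hk : (0:ℝ) ≤ k := k.cast_nonneg
    rw [abs_of_nonneg (by positivity), div_le_one (by positivity)]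
    linarith
  have hg : Summable fun k : ℕ => ‖z‖ ^ (k + 1) :=
    (summable_nat_add_iff 1).2 (summable_geometric_of_lt_one (norm_nonneg z) hz)
  have s1 : Summable fun k : ℕ => ((α / (α + (k : ℝ) + 1) : ℝ) : ℂ) * z ^ (k + 1) := by
    refine Summable.of_norm_bounded hg fun k => ?_
    rw [norm_mul, Complex.norm_real, norm_pow, Real.norm_eq_abs]
    exact mul_le_of_le_one_left (by positivity) (hc k)
  have s2 : Summable fun k : ℕ => (α / (α + (k : ℝ) + 1)) * (-‖z‖) ^ (k + 1) := by
    refine Summable.of_norm_bounded hg fun k => ?_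
    rw [norm_mul, norm_pow, Real.norm_eq_abs, norm_neg, norm_norm]
    exact mul_le_of_le_one_left (by positivity) (hc k)
  have h := ((Complex.hasSum_re s1.hasSum).sub s2.hasSum).tsum_eq
  have h0 := aux_nonneg α hα z hz
  simp_rw [Complex.re_ofReal_mul, ← mul_sub] at h
  rw [h] at h0
  have : ∀ S : ℂ, (1 + 2 * S).re = 1 + 2 * S.re := by intro S; simp
  rw [this]
  linarith
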